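/- Theorem (no strong universality): the evolution of any 5-state rotation-symmetric number-conserving cellular automaton on the von Neumann neighborhood from a finite initial configuration is ultimately periodic; i.e., for every such automaton A and finite configuration C there exist i < j with Aⁱ(C) = Aʲ(C). -/

import Mathlib

/-- The global map of a von Neumann neighborhood CA with local rule `f`. -/
def glob (f : ℤ → ℤ → ℤ → ℤ → ℤ → ℤ) (C : ℤ × ℤ → ℤ) : ℤ × ℤ → ℤ :=
  fun p => f (C p) (C (p.1, p.2 + 1)) (C (p.1 + 1, p.2)) (C (p.1, p.2 - 1))
    (C (p.1 - 1, p.2))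

/-!
Number conservation and rotation symmetry write the local rule as a sum of two antisymmetric flows:
`g`, between two cells sharing a side, which depends on their states, and `h`, between two cells
sharing a corner, which depends on the states of their two common neighbors.
If `g` vanishes, an extremal state shows that the rule is the identity. If `g x y ≠ 0`, then
surrounding a cell `x` by up to four cells `y` produces the five states `x + i * g x y`; when there
are at most five states, these are all of them and `y` is the last. In the coordinate `i` the flow
`g` moves one unit from `4` to `0` and nothing else, and `h` is `β * g` with `|β| ≤ 1`. As `x` and
`y` may be exchanged, the quiescent state is not `4`.

The evolution then visits only finitely many cells. If the quiescent state is `1`, `2` or `3`, a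
quiescent row stays quiescent. If it is `0`, the conserved sum of states bounds the number of
nonzero rows at any time, and two adjacent rows can become zero together only if both were zero
before. So a row that becomes zero leaves both adjacent rows nonzero, and hence at any later time
each row visited so far is within distance one of a nonzero row: only boundedly many rows are ever
visited. Exchanging the axes replaces `β` by `-β`, which gives the same for columns, and the
pigeonhole principle makes the orbit repeat.
-/

/-! ### Flow decomposition -/

/-- A rotation-symmetric number-conserving automaton with state set `Q` and quiescent state `q`. -/
structure IsRNCA (Q : Finset ℤ) (q : ℤ) (f : ℤ → ℤ → ℤ → ℤ → ℤ → ℤ) : Prop where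
  quiescent_mem : q ∈ Q
  mem : ∀ c ∈ Q, ∀ u ∈ Q, ∀ r ∈ Q, ∀ d ∈ Q, ∀ l ∈ Q, f c u r d l ∈ Q
  rotate : ∀ c u r d l, c ∈ Q → u ∈ Q → r ∈ Q → d ∈ Q → l ∈ Q → f c u r d l = f c r d l u
  quiescent_fixed : f q q q q q = q
  finsum_sub_eq_zero : ∀ C : ℤ × ℤ → ℤ, (∀ p, C p ∈ Q) → {p | C p ≠ q}.Finite →
    ∑ᶠ p, (glob f C p - C p) = 0

section Neighborhood

open scoped Pointwise

/-- The von Neumann neighborhood of the origin. -/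
def vonNeumann : Finset (ℤ × ℤ) := {(0, 0), (0, 1), (1, 0), (0, -1), (-1, 0)}

variable {f : ℤ → ℤ → ℤ → ℤ → ℤ → ℤ} {q : ℤ}

theorem setOf_glob_ne_subset (hq : f q q q q q = q) (C : ℤ × ℤ → ℤ) :
    {p | glob f C p ≠ q} ⊆ {p | C p ≠ q} + (vonNeumann : Set (ℤ × ℤ)) := by
  intro p hp
  by_contra hfar
  have hquiet : ∀ v ∈ vonNeumann, C (p - v) = q := fun v hv => by
    by_contra hne
    exact hfar ⟨p - v, hne, v, hv, sub_add_cancel p v⟩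
  refine hp ?_
  obtain ⟨x, y⟩ := p
  simp_all [vonNeumann, glob]

theorem finite_setOf_glob_ne (hq : f q q q q q = q) {C : ℤ × ℤ → ℤ}
    (hC : {p | C p ≠ q}.Finite) : {p | glob f C p ≠ q}.Finite :=
  (hC.add vonNeumann.finite_toSet).subset (setOf_glob_ne_subset hq C)

/-- The configuration that is quiescent off the neighborhood of the origin and has the states
`c`, `u`, `r`, `d`, `l` on it. -/
def crossConfig (q c u r d l : ℤ) : ℤ × ℤ → ℤ := fun p =>
  if p = (0, 0) then c else if p = (0, 1) then u else if p = (1, 0) then r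
  else if p = (0, -1) then d else if p = (-1, 0) then l else q

theorem setOf_crossConfig_ne_subset (q c u r d l : ℤ) :
    {p | crossConfig q c u r d l p ≠ q} ⊆ (vonNeumann : Set (ℤ × ℤ)) := by
  intro p hp
  by_contra hfar
  simp_all [vonNeumann, crossConfig]

theorem finsum_crossConfig (hq : f q q q q q = q) (c u r d l : ℤ) :
    ∑ᶠ p, (glob f (crossConfig q c u r d l) p - crossConfig q c u r d l p) =
      (f c u r d l - c) + (f u q q c q - u) + (f r q q q c - r) + (f d c q q q - d)
        + (f l q c q q - l) + (f q q q u q - q) + (f q q q q r - q) + (f q d q q q - q)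
        + (f q q l q q - q) + (f q q q r u - q) + (f q r q q d - q) + (f q l d q q - q)
        + (f q q u l q - q) := by
  have hcross := setOf_crossConfig_ne_subset q c u r d l
  have hglob := (setOf_glob_ne_subset hq _).trans (Set.add_subset_add_right hcross)
  have hsupport : (fun p => glob f (crossConfig q c u r d l) p
      - crossConfig q c u r d l p).support ⊆ ↑(vonNeumann + vonNeumann) := by
    rw [Finset.coe_add]
    intro p hp
    by_contra hfar
    have hzero : (0 : ℤ × ℤ) ∈ (vonNeumann : Set (ℤ × ℤ)) := Finset.mem_coe.2 (by decide)
    have h₁ : crossConfig q c u r d l p = q := by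
      by_contra hne
      exact hfar (Set.subset_add_left _ hzero (hcross hne))
    have h₂ : glob f (crossConfig q c u r d l) p = q := by
      by_contra hne
      exact hfar (hglob hne)
    exact hp (by simp [h₁, h₂])
  have hball : vonNeumann + vonNeumann = {(0, 0), (0, 1), (1, 0), (0, -1), (-1, 0), (0, 2),
    (2, 0), (0, -2), (-2, 0), (1, 1), (1, -1), (-1, -1), (-1, 1)} := by decide
  rw [finsum_eq_sum_of_support_subset _ hsupport, hball]
  simp only [Int.reduceNeg, glob, crossConfig, Prod.mk.injEq, add_eq_right, sub_eq_neg_self,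
    Finset.sum_sub_distrib, Finset.mem_insert, zero_ne_one, and_false, and_true, zero_eq_neg,
    one_ne_zero, OfNat.zero_ne_ofNat, OfNat.ofNat_ne_zero, and_self, Finset.mem_singleton, or_self,
    not_false_eq_true, Finset.sum_insert, ↓reduceIte, zero_add, zero_sub, neg_eq_zero,
    reduceCtorEq, OfNat.one_ne_ofNat, Int.reduceAdd, sub_self, neg_inj, neg_add_cancel,
    Int.reduceSub, OfNat.ofNat_ne_one, Finset.sum_singleton]
  ring

end Neighborhood

/-- The gain of a cell in state `x` next to a cell in state `y`, surrounded by quiescence. -/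
def sideGain (f : ℤ → ℤ → ℤ → ℤ → ℤ → ℤ) (q x y : ℤ) : ℤ := f x y q q q - x

/-- The gain of a quiescent cell between an upper neighbor `x` and a right neighbor `y`. -/
def cornerGain (f : ℤ → ℤ → ℤ → ℤ → ℤ → ℤ) (q x y : ℤ) : ℤ := f q x y q q - q

namespace IsRNCA

variable {Q : Finset ℤ} {q : ℤ} {f : ℤ → ℤ → ℤ → ℤ → ℤ → ℤ}

theorem sideGain_eq (hf : IsRNCA Q q f) {x y : ℤ} (hx : x ∈ Q) (hy : y ∈ Q) :
    f x q q q y - x = sideGain f q x y ∧ f x q q y q - x = sideGain f q x y ∧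
      f x q y q q - x = sideGain f q x y := by
  have hq := hf.quiescent_mem
  have h₁ := hf.rotate x y q q q hx hy hq hq hq
  have h₂ := hf.rotate x q q q y hx hq hq hq hy
  have h₃ := hf.rotate x q q y q hx hq hq hy hq
  grind [sideGain]

theorem cornerGain_eq (hf : IsRNCA Q q f) {x y : ℤ} (hx : x ∈ Q) (hy : y ∈ Q) :
    f q y q q x - q = cornerGain f q x y ∧ f q q q x y - q = cornerGain f q x y ∧
      f q q x y q - q = cornerGain f q x y := by
  have hq := hf.quiescent_mem
  have h₁ := hf.rotate q x y q q hq hx hy hq hq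
  have h₂ := hf.rotate q y q q x hq hy hq hq hx
  have h₃ := hf.rotate q q q x y hq hq hq hx hy
  grind [cornerGain]

theorem sum_gain_eq_zero (hf : IsRNCA Q q f) {c u r d l : ℤ} (hc : c ∈ Q) (hu : u ∈ Q)
    (hr : r ∈ Q) (hd : d ∈ Q) (hl : l ∈ Q) :
    f c u r d l - c
      + (sideGain f q u c + sideGain f q r c + sideGain f q d c + sideGain f q l c)
      + (sideGain f q q u + sideGain f q q r + sideGain f q q d + sideGain f q q l)
      + (cornerGain f q r u + cornerGain f q d r + cornerGain f q l d + cornerGain f q u l)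
      = 0 := by
  have hq := hf.quiescent_mem
  have hmem : ∀ p, crossConfig q c u r d l p ∈ Q := fun p => by
    unfold crossConfig; split_ifs <;> assumption
  have hsum := hf.finsum_sub_eq_zero _ hmem
    (vonNeumann.finite_toSet.subset (setOf_crossConfig_ne_subset q c u r d l))
  rw [finsum_crossConfig hf.quiescent_fixed, (hf.sideGain_eq hu hc).2.1,
    (hf.sideGain_eq hr hc).1, (hf.sideGain_eq hl hc).2.2, (hf.sideGain_eq hq hu).2.1,
    (hf.sideGain_eq hq hr).1, (hf.sideGain_eq hq hl).2.2, (hf.cornerGain_eq hr hu).2.1,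
    (hf.cornerGain_eq hd hr).1, (hf.cornerGain_eq hu hl).2.2] at hsum
  simp only [sideGain, cornerGain] at hsum ⊢
  linarith

end IsRNCA

/-- The local rule with side flow `g` and corner flow `h`: a cell in state `c` receives `g c x` from
a neighbor in state `x`, and `h x y` from the cell diagonally across its consecutive neighbors in
states `x` and `y`. -/
def flowRule (g h : ℤ → ℤ → ℤ) (c u r d l : ℤ) : ℤ :=
  c + (g c u + g c r + g c d + g c l) + (h u r + h r d + h d l + h l u)

/-- Antisymmetric flows on the state set `Q` whose rule `flowRule g h` maps `Q` to itself. -/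
structure AreFlows (Q : Finset ℤ) (g h : ℤ → ℤ → ℤ) : Prop where
  side_swap : ∀ x ∈ Q, ∀ y ∈ Q, g y x = -g x y
  corner_swap : ∀ x ∈ Q, ∀ y ∈ Q, h y x = -h x y
  mem : ∀ c ∈ Q, ∀ u ∈ Q, ∀ r ∈ Q, ∀ d ∈ Q, ∀ l ∈ Q, flowRule g h c u r d l ∈ Q

theorem IsRNCA.exists_flows {Q : Finset ℤ} {q : ℤ} {f : ℤ → ℤ → ℤ → ℤ → ℤ → ℤ}
    (hf : IsRNCA Q q f) : ∃ g h, AreFlows Q g h ∧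
      ∀ c ∈ Q, ∀ u ∈ Q, ∀ r ∈ Q, ∀ d ∈ Q, ∀ l ∈ Q, f c u r d l = flowRule g h c u r d l := by
  have hq := hf.quiescent_mem
  have hqq : f q q q q q = q := hf.quiescent_fixed
  have hside : ∀ x ∈ Q, ∀ y ∈ Q, sideGain f q x y + sideGain f q y x
      + 3 * sideGain f q q x + 3 * sideGain f q q y = 0 := fun x hx y hy => by
    have h := hf.sum_gain_eq_zero hx hy hq hq hq
    have h' := (hf.sideGain_eq hq hy).2.2
    simp only [sideGain, cornerGain, hqq] at h h' ⊢
    linarith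
  have hcorner : ∀ x ∈ Q, ∀ y ∈ Q, cornerGain f q x y + cornerGain f q y x
      = 2 * sideGain f q q x + 2 * sideGain f q q y := fun x hx y hy => by
    have h := hf.sum_gain_eq_zero hq hx hy hq hq
    have h' := (hf.sideGain_eq hq hy).2.2
    have hx' := hside x hx q hq
    have hy' := hside y hy q hq
    simp only [sideGain, cornerGain, hqq] at h h' hx' hy' ⊢
    linarith
  -- Splitting the coefficient `-1` of `sideGain f q q x` as `-3 + 2` makes both flows
  -- antisymmetric.
  let g : ℤ → ℤ → ℤ := fun c x => -sideGain f q x c - 3 * sideGain f q q x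
  let h : ℤ → ℤ → ℤ := fun x y => -cornerGain f q y x + sideGain f q q x + sideGain f q q y
  have hrule : ∀ c ∈ Q, ∀ u ∈ Q, ∀ r ∈ Q, ∀ d ∈ Q, ∀ l ∈ Q,
      f c u r d l = flowRule g h c u r d l := fun c hc u hu r hr d hd l hl => by
    simp only [flowRule, g, h]
    linear_combination hf.sum_gain_eq_zero hc hu hr hd hl
  refine ⟨g, h, ⟨fun x hx y hy => ?_, fun x hx y hy => ?_, fun c hc u hu r hr d hd l hl => ?_⟩,
    hrule⟩
  · linear_combination -hside x hx y hy
  · linear_combination -hcorner x hx y hy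
  · exact hrule c hc u hu r hr d hd l hl ▸ hf.mem c hc u hu r hr d hd l hl

/-! ### Normal form of the rule -/

/-- The elementary flow: a unit passes from a state `4` to a state `0`. The value is what `x`
receives from `y`. -/
def unitFlow (x y : ℤ) : ℤ :=
  if x = 0 ∧ y = 4 then 1 else if x = 4 ∧ y = 0 then -1 else 0

/-- The normal form of a five-state rule: states `0, …, 4`, side flow `unitFlow` and corner flow
`β * unitFlow`. -/
def unitRule (β : ℤ) : ℤ → ℤ → ℤ → ℤ → ℤ → ℤ :=
  flowRule unitFlow fun x y => β * unitFlow x y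

/-- States that exchange nothing under the elementary flow. -/
def Inert (c : ℤ) : Prop := c ≠ 0 ∧ c ≠ 4

theorem Inert.unitFlow_left {c : ℤ} (hc : Inert c) (x : ℤ) : unitFlow c x = 0 := by
  grind [Inert, unitFlow]

theorem unitFlow_swap (x y : ℤ) : unitFlow y x = -unitFlow x y := by
  grind [unitFlow]

theorem flowRule_add_coboundary (g h : ℤ → ℤ → ℤ) (φ : ℤ → ℤ) :
    flowRule g (fun x y => h x y + φ y - φ x) = flowRule g h := by
  funext c u r d l
  simp only [flowRule]
  ring

theorem flowRule_affine {g h g' h' : ℤ → ℤ → ℤ} {s : Set ℤ} {a k : ℤ}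
    (hg : ∀ i ∈ s, ∀ j ∈ s, g (a + k * i) (a + k * j) = k * g' i j)
    (hh : ∀ i ∈ s, ∀ j ∈ s, h (a + k * i) (a + k * j) = k * h' i j)
    {c u r d l : ℤ} (hc : c ∈ s) (hu : u ∈ s) (hr : r ∈ s) (hd : d ∈ s) (hl : l ∈ s) :
    flowRule g h (a + k * c) (a + k * u) (a + k * r) (a + k * d) (a + k * l) =
      a + k * flowRule g' h' c u r d l := by
  rw [flowRule, hg c hc u hu, hg c hc r hr, hg c hc d hd, hg c hc l hl, hh u hu r hr,
    hh r hr d hd, hh d hd l hl, hh l hl u hu, flowRule]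
  ring

theorem image_progression_eq {Q : Finset ℤ} {n : ℕ} (hcard : Q.card ≤ n + 1) {a k : ℤ}
    (hk : k ≠ 0) (hQ : ∀ i ∈ Finset.Icc (0 : ℤ) n, a + k * i ∈ Q) :
    (Finset.Icc (0 : ℤ) n).image (fun i => a + k * i) = Q := by
  have hinj : Function.Injective fun i : ℤ => a + k * i := fun i j hij => by
    simpa [hk] using hij
  refine Finset.eq_of_subset_of_card_le (Finset.image_subset_iff.2 hQ) ?_
  rw [Finset.card_image_of_injective _ hinj]
  simpa using hcard

namespace AreFlows

variable {Q : Finset ℤ} {g h : ℤ → ℤ → ℤ}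

theorem side_self (H : AreFlows Q g h) {x : ℤ} (hx : x ∈ Q) : g x x = 0 := by
  linarith [H.side_swap x hx x hx]

theorem corner_self (H : AreFlows Q g h) {x : ℤ} (hx : x ∈ Q) : h x x = 0 := by
  linarith [H.corner_swap x hx x hx]

theorem add_coboundary (H : AreFlows Q g h) (φ : ℤ → ℤ) :
    AreFlows Q g fun x y => h x y + φ y - φ x where
  side_swap := H.side_swap
  corner_swap x hx y hy := by linear_combination H.corner_swap x hx y hy
  mem := by simpa only [flowRule_add_coboundary] using H.mem

theorem exists_corner_eq_zero (H : AreFlows Q g h) {z : ℤ} (hz : z ∈ Q) :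
    ∃ h', AreFlows Q g h' ∧ flowRule g h' = flowRule g h ∧ ∀ x ∈ Q, h' z x = 0 := by
  refine ⟨_, H.add_coboundary (h · z), flowRule_add_coboundary g h (h · z), fun x hx => ?_⟩
  linear_combination H.corner_swap z hz x hx - H.corner_self hz

/-- The corner sum does not depend on the center. It is nonnegative around a center of least state,
and reversing the order of the neighbors changes its sign. -/
theorem flowRule_eq_center (H : AreFlows Q g h) (hg : ∀ x ∈ Q, ∀ y ∈ Q, g x y = 0)
    {c u r d l : ℤ} (hc : c ∈ Q) (hu : u ∈ Q) (hr : r ∈ Q) (hd : d ∈ Q) (hl : l ∈ Q) :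
    flowRule g h c u r d l = c := by
  obtain ⟨m, hm, hmin⟩ := Q.exists_min_image id ⟨c, hc⟩
  have h₁ := hmin _ (H.mem m hm u hu r hr d hd l hl)
  have h₂ := hmin _ (H.mem m hm l hl d hd r hr u hu)
  simp only [flowRule, id, hg m hm u hu, hg m hm r hr, hg m hm d hd, hg m hm l hl, hg c hc u hu,
    hg c hc r hr, hg c hc d hd, hg c hc l hl, H.corner_swap u hu r hr, H.corner_swap r hr d hd,
    H.corner_swap d hd l hl, H.corner_swap l hl u hu] at h₁ h₂ ⊢
  linarith

theorem add_mul_side_mem (H : AreFlows Q g h) {x y : ℤ} (hx : x ∈ Q) (hy : y ∈ Q) {i : ℤ}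
    (hi : i ∈ Finset.Icc (0 : ℤ) 4) : x + g x y * i ∈ Q := by
  suffices ∃ u ∈ Q, ∃ r ∈ Q, ∃ d ∈ Q, ∃ l ∈ Q, flowRule g h x u r d l = x + g x y * i by
    obtain ⟨u, hu, r, hr, d, hd, l, hl, hrule⟩ := this
    exact hrule ▸ H.mem x hx u hu r hr d hd l hl
  have hyx := H.corner_swap x hx y hy
  have hgx := H.side_self hx
  have hhx := H.corner_self hx
  have hhy := H.corner_self hy
  rw [Finset.mem_Icc] at hi
  obtain rfl | rfl | rfl | rfl | rfl : i = 0 ∨ i = 1 ∨ i = 2 ∨ i = 3 ∨ i = 4 := by lia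
  · exact ⟨x, hx, x, hx, x, hx, x, hx, by rw [flowRule]; linarith⟩
  · exact ⟨y, hy, x, hx, x, hx, x, hx, by rw [flowRule]; linarith⟩
  · exact ⟨y, hy, y, hy, x, hx, x, hx, by rw [flowRule]; linarith⟩
  · exact ⟨y, hy, y, hy, y, hy, x, hx, by rw [flowRule]; linarith⟩
  · exact ⟨y, hy, y, hy, y, hy, y, hy, by rw [flowRule]; linarith⟩

theorem image_side_progression (H : AreFlows Q g h) (hcard : Q.card ≤ 5) {x y : ℤ} (hx : x ∈ Q)
    (hy : y ∈ Q) (hxy : g x y ≠ 0) :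
    (Finset.Icc (0 : ℤ) 4).image (fun i => x + g x y * i) = Q :=
  image_progression_eq (n := 4) hcard hxy fun _ hi => H.add_mul_side_mem hx hy hi

theorem eq_add_side_mul_four (H : AreFlows Q g h) (hcard : Q.card ≤ 5) {x y : ℤ} (hx : x ∈ Q)
    (hy : y ∈ Q) (hxy : g x y ≠ 0) : y = x + g x y * 4 := by
  have hQ := H.image_side_progression hcard hx hy hxy
  have hend := H.add_mul_side_mem hy hx (Finset.right_mem_Icc.2 (by norm_num : (0 : ℤ) ≤ 4))
  have hy' := hy
  rw [H.side_swap x hx y hy] at hend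
  generalize g x y = k at *
  simp only [← hQ, Finset.mem_image, Finset.mem_Icc] at hy' hend
  obtain ⟨⟨i, hi, hyi⟩, j, hj, hyj⟩ := And.intro hy' hend
  have hij : k * (i - j - 4) = 0 := by linear_combination hyi - hyj
  have hi4 : i = 4 := by
    have := (mul_eq_zero.1 hij).resolve_left hxy
    lia
  rw [← hyi, hi4]

theorem side_eq_mul_unitFlow (H : AreFlows Q g h) (hcard : Q.card ≤ 5) {a b : ℤ} (ha : a ∈ Q)
    (hb : b ∈ Q) (hab : g a b ≠ 0) {i j : ℤ} (hi : i ∈ Finset.Icc (0 : ℤ) 4)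
    (hj : j ∈ Finset.Icc (0 : ℤ) 4) :
    g (a + g a b * i) (a + g a b * j) = g a b * unitFlow i j := by
  have hQ := H.image_side_progression hcard ha hb hab
  have hb4 := H.eq_add_side_mul_four hcard ha hb hab
  have hx := H.add_mul_side_mem ha hb hi
  have hy := H.add_mul_side_mem ha hb hj
  have hba := H.side_swap a ha b hb
  generalize hk : g a b = k at *
  by_cases hxy : g (a + k * i) (a + k * j) = 0
  · have h04 : ¬ (i = 0 ∧ j = 4) := by
      rintro ⟨rfl, rfl⟩
      exact hab (by rwa [mul_zero, add_zero, ← hb4, hk] at hxy)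
    have h40 : ¬ (i = 4 ∧ j = 0) := by
      rintro ⟨rfl, rfl⟩
      exact hab (by rwa [mul_zero, add_zero, ← hb4, hba, neg_eq_zero] at hxy)
    rw [hxy, unitFlow, if_neg h04, if_neg h40, mul_zero]
  · have hstep := H.eq_add_side_mul_four hcard hx hy hxy
    have hone := H.add_mul_side_mem hx hy (i := 1) (by simp)
    simp only [← hQ, Finset.mem_image] at hone
    obtain ⟨m, hm, hmx⟩ := hone
    have hflow : g (a + k * i) (a + k * j) = k * (m - i) := by linear_combination -hmx
    rw [hflow] at hstep hxy ⊢
    have hdist : j - i = 4 * (m - i) := mul_left_cancel₀ hab (by linear_combination hstep)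
    have hmi : m - i ≠ 0 := right_ne_zero_of_mul hxy
    rw [Finset.mem_Icc] at hi hj
    grind [unitFlow]

theorem of_affine (H : AreFlows Q g h) {s : Finset ℤ} {a k : ℤ} (hk : k ≠ 0)
    (hQ : s.image (fun i => a + k * i) = Q) {g' h' : ℤ → ℤ → ℤ}
    (hg : ∀ i ∈ s, ∀ j ∈ s, g (a + k * i) (a + k * j) = k * g' i j)
    (hh : ∀ i ∈ s, ∀ j ∈ s, h (a + k * i) (a + k * j) = k * h' i j) : AreFlows s g' h' := by
  have hmem : ∀ i, a + k * i ∈ Q ↔ i ∈ s := fun i => by simp [← hQ, hk]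
  refine ⟨fun i hi j hj => mul_left_cancel₀ hk ?_, fun i hi j hj => mul_left_cancel₀ hk ?_,
    fun c hc u hu r hr d hd l hl => ?_⟩
  · rw [← hg j hj i hi, H.side_swap _ ((hmem i).2 hi) _ ((hmem j).2 hj), hg i hi j hj, mul_neg]
  · rw [← hh j hj i hi, H.corner_swap _ ((hmem i).2 hi) _ ((hmem j).2 hj), hh i hi j hj, mul_neg]
  · rw [← hmem, ← flowRule_affine hg hh hc hu hr hd hl]
    exact H.mem _ ((hmem c).2 hc) _ ((hmem u).2 hu) _ ((hmem r).2 hr) _ ((hmem d).2 hd) _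
      ((hmem l).2 hl)

theorem add_corner_mem (H : AreFlows Q g h) {z : ℤ} (hz : z ∈ Q) (hhz : ∀ x ∈ Q, h z x = 0)
    {c x y : ℤ} (hc : c ∈ Q) (hx : x ∈ Q) (hy : y ∈ Q) (hgx : g c x = 0) (hgy : g c y = 0)
    (hgz : g c z = 0) : c + h x y ∈ Q := by
  have hyz : h y z = 0 := by rw [H.corner_swap z hz y hy, hhz y hy, neg_zero]
  simpa [flowRule, hgx, hgy, hgz, hyz, hhz z hz, hhz x hx] using H.mem c hc x hx y hy z hz z hz

theorem dvd_corner (H : AreFlows Q g h) {s : Finset ℤ} {a k : ℤ}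
    (hQ : s.image (fun i => a + k * i) = Q) {z : ℤ} (hz : z ∈ Q) (hhz : ∀ x ∈ Q, h z x = 0)
    (hgz : ∀ x ∈ Q, g z x = 0) {x y : ℤ} (hx : x ∈ Q) (hy : y ∈ Q) : k ∣ h x y := by
  have hsum := H.add_corner_mem hz hhz hz hx hy (hgz x hx) (hgz y hy) (hgz z hz)
  simp only [← hQ, Finset.mem_image] at hz hsum
  obtain ⟨⟨m, -, hm⟩, n, -, hn⟩ := And.intro hz hsum
  exact ⟨n - m, by linear_combination hm - hn⟩

theorem exists_corner_eq_mul_unitFlow (H : AreFlows (Finset.Icc 0 4) unitFlow h)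
    (hone : ∀ x ∈ Finset.Icc (0 : ℤ) 4, h 1 x = 0) : ∃ β : ℤ, |β| ≤ 1 ∧
      ∀ x ∈ Finset.Icc (0 : ℤ) 4, ∀ y ∈ Finset.Icc (0 : ℤ) 4, h x y = β * unitFlow x y := by
  have hbound : ∀ c ∈ Finset.Icc (0 : ℤ) 4, ∀ x ∈ Finset.Icc (0 : ℤ) 4,
      ∀ y ∈ Finset.Icc (0 : ℤ) 4, unitFlow c x = 0 → unitFlow c y = 0 →
      0 ≤ c + h x y ∧ c + h x y ≤ 4 ∧ 0 ≤ c - h x y ∧ c - h x y ≤ 4 := by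
    intro c hc x hx y hy hcx hcy
    have hc1 : unitFlow c 1 = 0 := by simp [unitFlow]
    have hxy := H.add_corner_mem (by simp) hone hc hx hy hcx hcy hc1
    have hyx := H.add_corner_mem (by simp) hone hc hy hx hcy hcx hc1
    rw [H.corner_swap x hx y hy, ← sub_eq_add_neg] at hyx
    exact ⟨(Finset.mem_Icc.1 hxy).1, (Finset.mem_Icc.1 hxy).2, Finset.mem_Icc.1 hyx⟩
  refine ⟨h 0 4, ?_, fun x hx y hy => ?_⟩
  · have h04 := hbound 1 (by simp) 0 (by simp) 4 (by simp) (by simp [unitFlow]) (by simp [unitFlow])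
    rw [abs_le]
    lia
  by_cases h04 : x = 0 ∧ y = 4
  · simp [h04, unitFlow]
  by_cases h40 : x = 4 ∧ y = 0
  · rw [h40.1, h40.2, H.corner_swap 0 (by simp) 4 (by simp)]
    simp [unitFlow]
  rw [unitFlow, if_neg h04, if_neg h40, mul_zero]
  obtain ⟨hx4, hy4⟩ | ⟨hx0, hy0⟩ : x ≠ 4 ∧ y ≠ 4 ∨ x ≠ 0 ∧ y ≠ 0 := by lia
  · have h0 := hbound 0 (by simp) x hx y hy (by simp [unitFlow, hx4]) (by simp [unitFlow, hy4])
    lia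
  · have h4 := hbound 4 (by simp) x hx y hy (by simp [unitFlow, hx0]) (by simp [unitFlow, hy0])
    lia

end AreFlows

/-- The rule `f` on the states `Q` becomes `unitRule β` in the coordinate `i ↦ a + k * i`. -/
structure HasUnitForm (Q : Finset ℤ) (f : ℤ → ℤ → ℤ → ℤ → ℤ → ℤ) (a k β : ℤ) : Prop where
  step_ne_zero : k ≠ 0
  abs_le_one : |β| ≤ 1
  image_eq : (Finset.Icc (0 : ℤ) 4).image (fun i => a + k * i) = Q
  rule_eq : ∀ c ∈ Finset.Icc (0 : ℤ) 4, ∀ u ∈ Finset.Icc (0 : ℤ) 4,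
    ∀ r ∈ Finset.Icc (0 : ℤ) 4, ∀ d ∈ Finset.Icc (0 : ℤ) 4, ∀ l ∈ Finset.Icc (0 : ℤ) 4,
    f (a + k * c) (a + k * u) (a + k * r) (a + k * d) (a + k * l) = a + k * unitRule β c u r d l

theorem AreFlows.exists_hasUnitForm {Q : Finset ℤ} {g h : ℤ → ℤ → ℤ} (H : AreFlows Q g h)
    (hcard : Q.card ≤ 5) {a b : ℤ} (ha : a ∈ Q) (hb : b ∈ Q) (hab : g a b ≠ 0) :
    ∃ β, HasUnitForm Q (flowRule g h) a (g a b) β := by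
  have hQ := H.image_side_progression hcard ha hb hab
  have hside := fun i hi j hj => H.side_eq_mul_unitFlow hcard ha hb hab (i := i) (j := j) hi hj
  generalize g a b = k at *
  have hmem : ∀ i ∈ Finset.Icc (0 : ℤ) 4, a + k * i ∈ Q := fun i hi =>
    hQ ▸ Finset.mem_image_of_mem _ hi
  have hone : (1 : ℤ) ∈ Finset.Icc (0 : ℤ) 4 := by simp
  have hgone : ∀ x ∈ Q, g (a + k * 1) x = 0 := fun x hx => by
    obtain ⟨i, hi, rfl⟩ := Finset.mem_image.1 (hQ ▸ hx)
    rw [hside 1 hone i hi, Inert.unitFlow_left (by simp [Inert]), mul_zero]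
  obtain ⟨h', H', hrule, hhone⟩ := H.exists_corner_eq_zero (hmem 1 hone)
  let η : ℤ → ℤ → ℤ := fun i j => h' (a + k * i) (a + k * j) / k
  have hη : ∀ i ∈ Finset.Icc (0 : ℤ) 4, ∀ j ∈ Finset.Icc (0 : ℤ) 4,
      h' (a + k * i) (a + k * j) = k * η i j := fun i hi j hj =>
    (Int.mul_ediv_cancel'
      (H'.dvd_corner hQ (hmem 1 hone) hhone hgone (hmem i hi) (hmem j hj))).symm
  obtain ⟨β, hβ, hηβ⟩ := (H'.of_affine hab hQ hside hη).exists_corner_eq_mul_unitFlow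
    fun i hi => by simp only [η, hhone _ (hmem i hi), Int.zero_ediv]
  refine ⟨β, hab, hβ, hQ, fun c hc u hu r hr d hd l hl => ?_⟩
  rw [← hrule]
  exact flowRule_affine (s := Finset.Icc (0 : ℤ) 4) hside
    (fun i hi j hj => by rw [hη i hi j hj, hηβ i hi j hj]) hc hu hr hd hl

theorem IsRNCA.eq_center_or_exists_hasUnitForm {Q : Finset ℤ} {q : ℤ}
    {f : ℤ → ℤ → ℤ → ℤ → ℤ → ℤ} (hf : IsRNCA Q q f) (hcard : Q.card ≤ 5) :
    (∀ c ∈ Q, ∀ u ∈ Q, ∀ r ∈ Q, ∀ d ∈ Q, ∀ l ∈ Q, f c u r d l = c) ∨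
      ∃ a k β, HasUnitForm Q f a k β ∧ q ≠ a + k * 4 := by
  obtain ⟨g, h, H, hfgh⟩ := hf.exists_flows
  by_cases hg : ∀ x ∈ Q, ∀ y ∈ Q, g x y = 0
  · exact .inl fun c hc u hu r hr d hd l hl => by
      rw [hfgh c hc u hu r hr d hd l hl, H.flowRule_eq_center hg hc hu hr hd hl]
  push Not at hg
  obtain ⟨a, ha, b, hb, hab, hqb⟩ : ∃ a ∈ Q, ∃ b ∈ Q, g a b ≠ 0 ∧ q ≠ b := by
    obtain ⟨a, ha, b, hb, hab⟩ := hg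
    rcases ne_or_eq q b with hqb | rfl
    · exact ⟨a, ha, b, hb, hab, hqb⟩
    · refine ⟨q, hb, a, ha, ?_, ?_⟩
      · rwa [H.side_swap a ha q hb, neg_ne_zero]
      · rintro rfl
        exact hab (H.side_self ha)
  obtain ⟨β, hβ⟩ := H.exists_hasUnitForm hcard ha hb hab
  have hmem : ∀ i ∈ Finset.Icc (0 : ℤ) 4, a + g a b * i ∈ Q := fun i hi =>
    H.add_mul_side_mem ha hb hi
  refine .inr ⟨a, g a b, β, ⟨hβ.step_ne_zero, hβ.abs_le_one, hβ.image_eq,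
    fun c hc u hu r hr d hd l hl => ?_⟩, H.eq_add_side_mul_four hcard ha hb hab ▸ hqb⟩
  rw [hfgh _ (hmem c hc) _ (hmem u hu) _ (hmem r hr) _ (hmem d hd) _ (hmem l hl),
    hβ.rule_eq c hc u hu r hr d hd l hl]

/-! ### Adjacent vanishing rows -/

section UnitRule

variable {β : ℤ}

theorem unitRule_neg (β c u r d l : ℤ) : unitRule (-β) c u r d l = unitRule β c u l d r := by
  simp only [unitRule, flowRule, unitFlow_swap l u, unitFlow_swap d l, unitFlow_swap r d,
    unitFlow_swap u r]
  ring

theorem unitRule_rotate (β c u r d l : ℤ) : unitRule β c r d l u = unitRule β c u r d l := by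
  simp only [unitRule, flowRule]
  ring

theorem unitRule_of_inert {c : ℤ} (hc : Inert c) (u d : ℤ) : unitRule β c u c d c = c := by
  simp only [unitRule, flowRule, hc.unitFlow_left, unitFlow_swap c, neg_zero, mul_zero, add_zero]

theorem neighbors_eq_zero_of_unitRule_four {u r d l : ℤ} (hβ : |β| ≤ 1)
    (h : unitRule β 4 u r d l = 0) : u = 0 ∧ r = 0 ∧ d = 0 ∧ l = 0 := by
  wlog hβ₀ : 0 ≤ β generalizing β r l
  · have := this (by rwa [abs_neg]) ((unitRule_neg β 4 u l d r).trans h) (by lia)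
    tauto
  obtain rfl | rfl : β = 0 ∨ β = 1 := by
    rw [abs_le] at hβ; lia
  all_goals
    simp only [unitRule, flowRule, unitFlow, zero_mul, one_mul] at h
    by_cases u = 0 <;> by_cases r = 0 <;> by_cases d = 0 <;> by_cases l = 0 <;> grind

theorem eq_four_of_unitRule_inert {c u d l : ℤ} (hβ : 0 ≤ β) (hc : Inert c) (hc₀ : 0 ≤ c)
    (hl : l ≠ 4) (h : unitRule β c u 0 d l = 0) : u = 4 := by
  by_contra hu
  have hcorner : 0 ≤ unitFlow u 0 + unitFlow 0 d + unitFlow d l + unitFlow l u := by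
    grind [unitFlow]
  have hgain := mul_nonneg hβ hcorner
  have hpos := hc₀.lt_of_ne hc.1.symm
  simp only [unitRule, flowRule, hc.unitFlow_left] at h
  linarith

theorem inert_of_unitRule_zero {u d : ℤ} (hβ : 0 ≤ β) (h : unitRule β 0 u 4 d 0 = 0) :
    Inert u := by
  unfold unitRule flowRule unitFlow at h
  grind [Inert]

end UnitRule

/-- `U`, `B`, `D` are consecutive rows of a configuration, from top to bottom, and `unitRule β`
sends every cell of `B` to `0`. -/
def RowVanishes (β : ℤ) (U B D : ℤ → ℤ) : Prop :=
  ∀ x, unitRule β (B x) (U x) (B (x + 1)) (D x) (B (x - 1)) = 0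

namespace RowVanishes

variable {β : ℤ} {U' U B D : ℤ → ℤ}

theorem flip (h : RowVanishes β U B D) : RowVanishes (-β) D B U := fun x => by
  rw [unitRule_neg, unitRule_rotate, unitRule_rotate]
  exact h x

theorem mirror (h : RowVanishes β U B D) :
    RowVanishes (-β) (fun x => U (-x)) (fun x => B (-x)) fun x => D (-x) := fun x => by
  rw [unitRule_neg]
  simpa only [neg_add, neg_sub', sub_neg_eq_add, ← sub_eq_add_neg] using h (-x)

theorem neighbors_eq_zero (h : RowVanishes β U B D) (hβ : |β| ≤ 1) {x : ℤ} (hx : B x = 4) :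
    U x = 0 ∧ B (x + 1) = 0 ∧ D x = 0 ∧ B (x - 1) = 0 :=
  neighbors_eq_zero_of_unitRule_four hβ (hx ▸ h x)

theorem exists_eq_four_above (h : RowVanishes β U B D) (hβ : |β| ≤ 1) (hB : ∀ x, 0 ≤ B x)
    (hfin : {x | B x ≠ 0}.Finite) (hinert : ∃ x, Inert (B x)) : ∃ x, U x = 4 ∧ B x ≠ 0 := by
  wlog hβ₀ : 0 ≤ β generalizing β U B D
  · obtain ⟨x, hx⟩ := hinert
    obtain ⟨y, hy⟩ := this h.mirror (by rwa [abs_neg]) (fun x => hB (-x))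
      (hfin.preimage neg_injective.injOn) ⟨-x, by rwa [neg_neg]⟩ (by lia)
    exact ⟨-y, hy⟩
  obtain ⟨x, hx, hmax⟩ := (hfin.subset fun x (hx : Inert (B x)) => hx.1).exists_maximal hinert
  have hnext : B (x + 1) = 0 := by
    by_contra hne
    refine absurd (hmax (y := x + 1) ⟨hne, fun h4 => hx.1 ?_⟩ (by simp)) (by simp)
    simpa using (h.neighbors_eq_zero hβ h4).2.2.2
  have hprev : B (x - 1) ≠ 4 := fun h4 => hx.1 (by simpa using (h.neighbors_eq_zero hβ h4).2.1)
  have hstep := h x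
  rw [hnext] at hstep
  exact ⟨x, eq_four_of_unitRule_inert hβ₀ hx (hB x) hprev hstep, hx.1⟩

theorem exists_inert_above (h : RowVanishes β U B D) (hfin : {x | B x ≠ 0}.Finite)
    (hinert : ∀ x, ¬Inert (B x)) (hne : ∃ x, B x ≠ 0) : ∃ x, Inert (U x) := by
  wlog hβ₀ : 0 ≤ β generalizing β U B D
  · obtain ⟨x, hx⟩ := hne
    obtain ⟨y, hy⟩ := this h.mirror (hfin.preimage neg_injective.injOn) (fun x => hinert (-x))
      ⟨-x, by rwa [neg_neg]⟩ (by lia)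
    exact ⟨-y, hy⟩
  obtain ⟨x, hx, hmin⟩ := hfin.exists_minimal hne
  have hzero : ∀ y < x, B y = 0 := fun y hy => by
    by_contra hy0
    exact absurd (hmin hy0 hy.le) hy.not_ge
  have hstep := h (x - 1)
  have hx4 : B x = 4 := by
    by_contra h4
    exact hinert x ⟨hx, h4⟩
  rw [hzero (x - 1) (by lia), hzero (x - 1 - 1) (by lia), sub_add_cancel, hx4] at hstep
  exact ⟨x - 1, inert_of_unitRule_zero hβ₀ hstep⟩

theorem eq_zero_of_adjacent (hU : RowVanishes β U' U B) (hB : RowVanishes β U B D) (hβ : |β| ≤ 1)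
    (hU₀ : ∀ x, 0 ≤ U x) (hB₀ : ∀ x, 0 ≤ B x) (hUfin : {x | U x ≠ 0}.Finite)
    (hBfin : {x | B x ≠ 0}.Finite) (x : ℤ) : B x = 0 := by
  by_contra hx
  by_cases hinert : ∃ y, Inert (B y)
  · obtain ⟨y, hUy, hBy⟩ := hB.exists_eq_four_above hβ hB₀ hBfin hinert
    exact hBy (hU.neighbors_eq_zero hβ hUy).2.2.1
  · push Not at hinert
    obtain ⟨y, hBy, hUy⟩ := hU.flip.exists_eq_four_above (by rwa [abs_neg]) hU₀ hUfin
      (hB.exists_inert_above hBfin hinert ⟨x, hx⟩)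
    exact hUy (hB.neighbors_eq_zero hβ hBy).1

end RowVanishes

section Persistence

variable {A : ℕ → Set ℤ}

theorem exists_near_of_le
    (hA : ∀ t, ∀ y ∈ A t, y ∉ A (t + 1) → y - 1 ∈ A (t + 1) ∧ y + 1 ∈ A (t + 1))
    {s t : ℕ} (hst : s ≤ t) {y : ℤ} (hy : y ∈ A s) : ∃ z ∈ A t, |y - z| ≤ 1 := by
  induction t, hst using Nat.le_induction with
  | base => exact ⟨y, hy, by simp⟩
  | succ t _ ih =>
    obtain ⟨z, hz, hyz⟩ := ih
    by_cases hkeep : z ∈ A (t + 1)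
    · exact ⟨z, hkeep, hyz⟩
    obtain ⟨hpred, hsucc⟩ := hA t z hz hkeep
    rw [abs_le] at hyz
    obtain hle | hle := le_total y z
    · exact ⟨z - 1, hpred, abs_le.2 (by lia)⟩
    · exact ⟨z + 1, hsucc, abs_le.2 (by lia)⟩

theorem finite_iUnion_of_ncard_le {M : ℕ} (hfin : ∀ t, (A t).Finite) (hcard : ∀ t, (A t).ncard ≤ M)
    (hA : ∀ t, ∀ y ∈ A t, y ∉ A (t + 1) → y - 1 ∈ A (t + 1) ∧ y + 1 ∈ A (t + 1)) :
    (⋃ t, A t).Finite := by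
  by_contra hinf
  obtain ⟨F, hFsub, hFcard⟩ := Set.Infinite.exists_subset_card_eq hinf (3 * M + 1)
  have htime : ∀ y ∈ F, ∃ s, y ∈ A s := fun y hy => Set.mem_iUnion.1 (hFsub hy)
  choose! τ hτ using htime
  let t := F.sup τ
  have hcover : F ⊆ (hfin t).toFinset.biUnion fun z => Finset.Icc (z - 1) (z + 1) := fun y hy => by
    obtain ⟨z, hz, hyz⟩ := exists_near_of_le hA (Finset.le_sup hy : τ y ≤ t) (hτ y hy)
    rw [abs_le] at hyz
    exact Finset.mem_biUnion.2 ⟨z, (hfin t).mem_toFinset.2 hz, Finset.mem_Icc.2 (by lia)⟩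
  have hbound := (Finset.card_le_card hcover).trans
    (Finset.card_biUnion_le_card_mul _ _ 3 fun z _ => by rw [Int.card_Icc]; lia)
  have hM := hcard t
  rw [Set.ncard_eq_toFinset_card _ (hfin t)] at hM
  lia

end Persistence

/-! ### Evolutions visit finitely many cells -/

theorem ncard_ne_zero_le_finsum {α : Type*} {F : α → ℤ} (hF : ∀ p, 0 ≤ F p)
    (hfin : {p | F p ≠ 0}.Finite) : ({p | F p ≠ 0}.ncard : ℤ) ≤ ∑ᶠ p, F p := by
  rw [Set.ncard_eq_toFinset_card _ hfin,
    finsum_eq_sum_of_support_subset F (s := hfin.toFinset) (by simp [Function.support]),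
    ← nsmul_one]
  refine Finset.card_nsmul_le_sum _ _ _ fun p hp => ?_
  have hne : F p ≠ 0 := hfin.mem_toFinset.1 hp
  have := hF p
  lia

/-- The rows of a configuration that contain a non-quiescent cell. -/
def activeRows (q : ℤ) (C : ℤ × ℤ → ℤ) : Set ℤ := Prod.snd '' {p | C p ≠ q}

theorem notMem_activeRows {q : ℤ} {C : ℤ × ℤ → ℤ} {y : ℤ} :
    y ∉ activeRows q C ↔ ∀ x, C (x, y) = q := by
  simp [activeRows]

/-- An orbit `S` of `unitRule β` consisting of finite configurations with states `0, …, 4`, along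
which the sum of the states is conserved. -/
structure UnitEvolution (β q : ℤ) (S : ℕ → ℤ × ℤ → ℤ) : Prop where
  step : ∀ t, S (t + 1) = glob (unitRule β) (S t)
  mem_Icc : ∀ t p, S t p ∈ Finset.Icc (0 : ℤ) 4
  finite_ne : ∀ t, {p | S t p ≠ q}.Finite
  finsum_sub_eq_zero : ∀ t, ∑ᶠ p, (S (t + 1) p - S t p) = 0

namespace UnitEvolution

variable {β q : ℤ} {S : ℕ → ℤ × ℤ → ℤ}

theorem swap (hS : UnitEvolution β q S) : UnitEvolution (-β) q fun t p => S t p.swap where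
  step t := by
    funext p
    simp only [hS.step t, glob, unitRule_neg, Prod.fst_swap, Prod.snd_swap, Prod.swap_prod_mk]
    exact (unitRule_rotate _ _ _ _ _ _).symm
  mem_Icc t p := hS.mem_Icc t p.swap
  finite_ne t := (hS.finite_ne t).preimage Prod.swap_injective.injOn
  finsum_sub_eq_zero t := by
    rw [← hS.finsum_sub_eq_zero t]
    exact finsum_comp_equiv (Equiv.prodComm ℤ ℤ) (f := fun p => S (t + 1) p - S t p)

theorem nonneg (hS : UnitEvolution β q S) (t : ℕ) (p : ℤ × ℤ) : 0 ≤ S t p :=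
  (Finset.mem_Icc.1 (hS.mem_Icc t p)).1

theorem finite_activeRows (hS : UnitEvolution β q S) (t : ℕ) : (activeRows q (S t)).Finite :=
  (hS.finite_ne t).image _

theorem finsum_eq (hS : UnitEvolution β 0 S) (t : ℕ) : ∑ᶠ p, S t p = ∑ᶠ p, S 0 p := by
  induction t with
  | zero => rfl
  | succ t ih =>
    rw [← ih, ← sub_eq_zero, ← finsum_sub_distrib (hS.finite_ne (t + 1)) (hS.finite_ne t)]
    exact hS.finsum_sub_eq_zero t

theorem ncard_activeRows_le (hS : UnitEvolution β 0 S) (t : ℕ) :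
    (activeRows 0 (S t)).ncard ≤ (∑ᶠ p, S 0 p).toNat := by
  refine (Set.ncard_image_le (hS.finite_ne t)).trans ?_
  have hcard := ncard_ne_zero_le_finsum (hS.nonneg t) (hS.finite_ne t)
  rw [hS.finsum_eq t] at hcard
  lia

theorem activeRows_succ_subset (hS : UnitEvolution β q S) (hq : Inert q) (t : ℕ) :
    activeRows q (S (t + 1)) ⊆ activeRows q (S t) := by
  intro y hy
  by_contra hquiet
  rw [notMem_activeRows] at hquiet
  refine notMem_activeRows.2 (fun x => ?_) hy
  simp only [hS.step t, glob, hquiet, unitRule_of_inert hq]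

theorem finite_row (hS : UnitEvolution β q S) (t : ℕ) (y : ℤ) : {x | S t (x, y) ≠ q}.Finite :=
  (hS.finite_ne t).preimage (Prod.mk_left_injective y).injOn

theorem rowVanishes (hS : UnitEvolution β 0 S) {t : ℕ} {y : ℤ}
    (hy : y ∉ activeRows 0 (S (t + 1))) : RowVanishes β (fun x => S t (x, y + 1))
      (fun x => S t (x, y)) fun x => S t (x, y - 1) := fun x => by
  simpa only [hS.step t, glob] using notMem_activeRows.1 hy x

theorem notMem_activeRows_of_succ (hS : UnitEvolution β 0 S) (hβ : |β| ≤ 1) {t : ℕ} {y : ℤ}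
    (hy : y ∉ activeRows 0 (S (t + 1))) (hy' : y + 1 ∉ activeRows 0 (S (t + 1))) :
    y ∉ activeRows 0 (S t) ∧ y + 1 ∉ activeRows 0 (S t) := by
  have hlow := hS.rowVanishes hy
  have hhigh := hS.rowVanishes hy'
  rw [add_sub_cancel_right] at hhigh
  have hnonneg : ∀ y x, 0 ≤ S t (x, y) := fun y x => hS.nonneg t (x, y)
  simp only [notMem_activeRows]
  exact ⟨hhigh.eq_zero_of_adjacent hlow hβ (hnonneg _) (hnonneg _) (hS.finite_row t _)
      (hS.finite_row t _),
    hlow.flip.eq_zero_of_adjacent hhigh.flip (by rwa [abs_neg]) (hnonneg _) (hnonneg _)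
      (hS.finite_row t _) (hS.finite_row t _)⟩

theorem adjacent_mem_activeRows (hS : UnitEvolution β 0 S) (hβ : |β| ≤ 1) {t : ℕ} {y : ℤ}
    (hy : y ∈ activeRows 0 (S t)) (hleave : y ∉ activeRows 0 (S (t + 1))) :
    y - 1 ∈ activeRows 0 (S (t + 1)) ∧ y + 1 ∈ activeRows 0 (S (t + 1)) := by
  constructor <;> by_contra hquiet
  · rw [← sub_add_cancel y 1] at hy hleave
    exact (hS.notMem_activeRows_of_succ hβ hquiet hleave).2 hy
  · exact (hS.notMem_activeRows_of_succ hβ hleave hquiet).1 hy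

theorem finite_iUnion_activeRows (hS : UnitEvolution β q S) (hβ : |β| ≤ 1) (hq : q ≠ 4) :
    (⋃ t, activeRows q (S t)).Finite := by
  rcases eq_or_ne q 0 with rfl | hq₀
  · exact finite_iUnion_of_ncard_le hS.finite_activeRows hS.ncard_activeRows_le
      fun _ _ => hS.adjacent_mem_activeRows hβ
  · have hanti : Antitone fun t => activeRows q (S t) :=
      antitone_nat_of_succ_le (hS.activeRows_succ_subset ⟨hq₀, hq⟩)
    exact (hS.finite_activeRows 0).subset (Set.iUnion_subset fun t => hanti t.zero_le)

theorem finite_exists_ne (hS : UnitEvolution β q S) (hβ : |β| ≤ 1) (hq : q ≠ 4) :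
    {p | ∃ t, S t p ≠ q}.Finite := by
  refine ((hS.swap.finite_iUnion_activeRows (by rwa [abs_neg]) hq).prod
    (hS.finite_iUnion_activeRows hβ hq)).subset ?_
  rintro p ⟨t, hp⟩
  exact ⟨Set.mem_iUnion.2 ⟨t, p.swap, by simpa using hp, rfl⟩, Set.mem_iUnion.2 ⟨t, p, hp, rfl⟩⟩

end UnitEvolution

theorem exists_lt_eq_of_finite {α β : Type*} {Q : Set β} (hQ : Q.Finite) {q : β} {D : ℕ → α → β}
    (hmem : ∀ t p, D t p ∈ Q) (hfin : {p | ∃ t, D t p ≠ q}.Finite) :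
    ∃ i j, i < j ∧ D i = D j := by
  have := hfin.to_subtype
  obtain ⟨i, j, hij, heq⟩ := Set.Finite.exists_lt_map_eq_of_forall_mem
    (t := {E : {p | ∃ t, D t p ≠ q} → β | ∀ p, E p ∈ Q}) (f := fun t p => D t p)
    (fun t p => hmem t p) (Set.Finite.pi' fun _ => hQ)
  refine ⟨i, j, hij, funext fun p => ?_⟩
  by_cases hp : ∃ t, D t p ≠ q
  · exact congrFun heq ⟨p, hp⟩
  · push Not at hp
    rw [hp i, hp j]

namespace IsRNCA

variable {Q : Finset ℤ} {q : ℤ} {f : ℤ → ℤ → ℤ → ℤ → ℤ → ℤ} {C : ℤ × ℤ → ℤ}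

theorem iterate_mem (hf : IsRNCA Q q f) (hCQ : ∀ p, C p ∈ Q) (t : ℕ) (p : ℤ × ℤ) :
    (glob f)^[t] C p ∈ Q := by
  induction t generalizing p with
  | zero => exact hCQ p
  | succ t ih =>
    rw [Function.iterate_succ_apply']
    exact hf.mem _ (ih _) _ (ih _) _ (ih _) _ (ih _) _ (ih _)

theorem finite_iterate_ne (hf : IsRNCA Q q f) (hCfin : {p | C p ≠ q}.Finite) (t : ℕ) :
    {p | (glob f)^[t] C p ≠ q}.Finite := by
  induction t with
  | zero => exact hCfin
  | succ t ih =>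
    rw [Function.iterate_succ_apply']
    exact finite_setOf_glob_ne hf.quiescent_fixed ih

theorem exists_unitEvolution (hf : IsRNCA Q q f) {a k β : ℤ} (hform : HasUnitForm Q f a k β)
    (hCQ : ∀ p, C p ∈ Q) (hCfin : {p | C p ≠ q}.Finite) :
    ∃ i S, q = a + k * i ∧ UnitEvolution β i S ∧ ∀ t p, (glob f)^[t] C p = a + k * S t p := by
  have hcoord : ∀ x ∈ Q, ∃ i ∈ Finset.Icc (0 : ℤ) 4, x = a + k * i := fun x hx => by
    obtain ⟨i, hi, hix⟩ := Finset.mem_image.1 (hform.image_eq ▸ hx)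
    exact ⟨i, hi, hix.symm⟩
  obtain ⟨i, -, hqi⟩ := hcoord q hf.quiescent_mem
  choose S hSmem hS using fun t p => hcoord _ (hf.iterate_mem hCQ t p)
  have hcancel : ∀ {m n : ℤ}, a + k * m = a + k * n ↔ m = n := by
    simp [hform.step_ne_zero]
  refine ⟨i, S, hqi, ⟨fun t => funext fun p => ?_, hSmem, fun t => ?_, fun t => ?_⟩, hS⟩
  · rw [← hcancel, ← hS, Function.iterate_succ_apply']
    simp only [glob, hS, hform.rule_eq _ (hSmem _ _) _ (hSmem _ _) _ (hSmem _ _) _ (hSmem _ _) _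
      (hSmem _ _)]
  · simpa only [hS, hqi, ne_eq, hcancel] using hf.finite_iterate_ne hCfin t
  · have hsum := hf.finsum_sub_eq_zero _ (hf.iterate_mem hCQ t) (hf.finite_iterate_ne hCfin t)
    have hdiff : ∀ p, glob f ((glob f)^[t] C) p - (glob f)^[t] C p = k • (S (t + 1) p - S t p) :=
      fun p => by rw [← Function.iterate_succ_apply' (glob f), hS, hS, smul_eq_mul]; ring
    simp only [hdiff, ← smul_finsum] at hsum
    exact (smul_eq_zero.1 hsum).resolve_left hform.step_ne_zero

end IsRNCA

theorem five_state_RNCA_ultimately_periodic_general {Q : Finset ℤ} {q : ℤ}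
    {f : ℤ → ℤ → ℤ → ℤ → ℤ → ℤ} (hf : IsRNCA Q q f) (hcard : Q.card ≤ 5) {C : ℤ × ℤ → ℤ}
    (hCQ : ∀ p, C p ∈ Q) (hCfin : {p | C p ≠ q}.Finite) :
    ∃ i j : ℕ, i < j ∧ (glob f)^[i] C = (glob f)^[j] C := by
  obtain hcenter | ⟨a, k, β, hform, hq4⟩ := hf.eq_center_or_exists_hasUnitForm hcard
  · exact ⟨0, 1, one_pos, funext fun p =>
      (hcenter _ (hCQ _) _ (hCQ _) _ (hCQ _) _ (hCQ _) _ (hCQ _)).symm⟩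
  · obtain ⟨i, S, rfl, hS, horbit⟩ := hf.exists_unitEvolution hform hCQ hCfin
    have hfin : {p | ∃ t, (glob f)^[t] C p ≠ a + k * i}.Finite := by
      simpa [horbit, hform.step_ne_zero] using
        hS.finite_exists_ne hform.abs_le_one fun hi => hq4 (by rw [hi])
    exact exists_lt_eq_of_finite Q.finite_toSet (hf.iterate_mem hCQ) hfin

/-- The evolution of any 5-state rotation-symmetric number-conserving CA on the
von Neumann neighborhood from a finite initial configuration is ultimately periodic. -/
theorem five_state_RNCA_ultimately_periodic (Q : Finset ℤ) (hcard : Q.card = 5)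
    (q₀ : ℤ) (hq₀ : q₀ ∈ Q) (f : ℤ → ℤ → ℤ → ℤ → ℤ → ℤ)
    (hclose : ∀ c ∈ Q, ∀ u ∈ Q, ∀ r ∈ Q, ∀ d ∈ Q, ∀ l ∈ Q, f c u r d l ∈ Q)
    (hrot : ∀ c u r d l, c ∈ Q → u ∈ Q → r ∈ Q → d ∈ Q → l ∈ Q →
      f c u r d l = f c r d l u)
    (hquiet : f q₀ q₀ q₀ q₀ q₀ = q₀)
    (hNC : ∀ C : ℤ × ℤ → ℤ, (∀ p, C p ∈ Q) → {p | C p ≠ q₀}.Finite →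
      ∑ᶠ p, (glob f C p - C p) = 0)
    (C : ℤ × ℤ → ℤ) (hCQ : ∀ p, C p ∈ Q) (hCfin : {p | C p ≠ q₀}.Finite) :
    ∃ i j : ℕ, i < j ∧ (glob f)^[i] C = (glob f)^[j] C :=
  five_state_RNCA_ultimately_periodic_general ⟨hq₀, hclose, hrot, hquiet, hNC⟩ hcard.le hCQ hCfin
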